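/- There exist absolute constants C, c, c' > 0 such that the following holds. Let ε ∈ (0,1), δ ≤ c·ε⁵, and n ≥ c'·log(ε/δ)/ε². Let Y denote the class of functions f : X^n → ℝ of sensitivity Δ > 0, and let A : X^n → Y be an (ε,δ)-differentially private algorithm. Let X ~ P^n for a distribution P over a countable domain X, and let q = A(X). Then Pr_{X, A}[ |q(P^n) − q(X)| ≥ C·ε·Δ·n ] < n·√(δ/ε), where q(P^n) = E_{X' ~ P^n}[q(X')]. -/

import Mathlib

open scoped ENNReal

/-- The probability that a sample from the probability mass function `μ` lands in `S`. -/
noncomputable def prob {α : Type*} (μ : PMF α) (S : Set α) : ℝ :=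
  (μ.toOuterMeasure S).toReal

/-- The independent coupling of two distributions: a pair whose components are independent
with the given marginal distributions. -/
noncomputable def indepPair {α β : Type*} (p : PMF α) (q : PMF β) : PMF (α × β) :=
  p.bind fun a => q.map fun b => (a, b)

/-- `MaxInfoLe μ b k` : the `b`-approximate max-information of the joint distribution `μ`
is at most `k` (measured in bits):  for every event `O` with `Pr[(X,Z) ∈ O] > b`,
`Pr[(X,Z) ∈ O] - b ≤ 2^k · Pr[X ⊗ Z ∈ O]`. -/
def MaxInfoLe {α β : Type*} (μ : PMF (α × β)) (b k : ℝ) : Prop :=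
  ∀ O : Set (α × β), b < prob μ O →
    prob μ O - b ≤ 2 ^ k * prob (indepPair (μ.map Prod.fst) (μ.map Prod.snd)) O

/-- The `n`-fold product (i.i.d.) distribution `P^n` on datasets of size `n`. -/
noncomputable def iidPMF {X : Type*} (P : PMF X) : (n : ℕ) → PMF (Fin n → X)
  | 0 => PMF.pure (fun i => i.elim0)
  | n + 1 => P.bind fun a => (iidPMF P n).map fun x => Fin.cons a x

/-- The joint distribution of `(X, A(X))` where `X ∼ μ` and `A` is a randomized algorithm. -/
noncomputable def jointPMF {D Y : Type*} (μ : PMF D) (A : D → PMF Y) : PMF (D × Y) :=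
  μ.bind fun x => (A x).map fun y => (x, y)
/-- Two datasets are neighboring if they differ in at most one entry. -/
def Neighbor {X : Type*} {n : ℕ} (x x' : Fin n → X) : Prop :=
  ∃ i : Fin n, ∀ j : Fin n, j ≠ i → x j = x' j

/-- `(ε,δ)`-differential privacy of a randomized algorithm `A` on datasets of size `n`. -/
def DiffPrivate {X Y : Type*} {n : ℕ} (A : (Fin n → X) → PMF Y) (ε δ : ℝ) : Prop :=
  ∀ x x' : Fin n → X, Neighbor x x' → ∀ O : Set Y,
    prob (A x) O ≤ Real.exp ε * prob (A x') O + δ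

/-- A probability weight function. -/
def IsWt {α : Type*} (p : α → ℝ) : Prop := (∀ a, 0 ≤ p a) ∧ HasSum p 1

/-- Expectation with respect to a weight function. -/
noncomputable def Ex {α : Type*} (p g : α → ℝ) : ℝ := ∑' a, p a * g a

/-- Bounded functions. -/
def Bd {α : Type*} (g : α → ℝ) : Prop := ∃ M, ∀ a, |g a| ≤ M

lemma Bd.summable {α : Type*} {p g : α → ℝ} (hg : Bd g) (hp : IsWt p) :
    Summable (fun a => p a * g a) := by
  obtain ⟨M, hM⟩ := hg
  refine Summable.of_norm_bounded (g := fun a => p a * M) (hp.2.summable.mul_right M) ?_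
  intro a
  rw [Real.norm_eq_abs, abs_mul, abs_of_nonneg (hp.1 a)]
  exact mul_le_mul_of_nonneg_left (hM a) (hp.1 a)

lemma Bd.add {α : Type*} {f g : α → ℝ} (hf : Bd f) (hg : Bd g) : Bd (fun a => f a + g a) := by
  obtain ⟨M, hM⟩ := hf
  obtain ⟨N, hN⟩ := hg
  exact ⟨M + N, fun a => (abs_add_le _ _).trans (add_le_add (hM a) (hN a))⟩

lemma Bd.mul {α : Type*} {f g : α → ℝ} (hf : Bd f) (hg : Bd g) : Bd (fun a => f a * g a) := by
  obtain ⟨M, hM⟩ := hf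
  obtain ⟨N, hN⟩ := hg
  refine ⟨M * N, fun a => ?_⟩
  rw [abs_mul]
  exact mul_le_mul (hM a) (hN a) (abs_nonneg _) ((abs_nonneg _).trans (hM a))

lemma Bd.const {α : Type*} (c : ℝ) : Bd (fun _ : α => c) := ⟨|c|, fun _ => le_rfl⟩

lemma Bd.sub {α : Type*} {f g : α → ℝ} (hf : Bd f) (hg : Bd g) : Bd (fun a => f a - g a) := by
  obtain ⟨M, hM⟩ := hf
  obtain ⟨N, hN⟩ := hg
  exact ⟨M + N, fun a => (abs_sub _ _).trans (add_le_add (hM a) (hN a))⟩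

lemma Bd.comp {α β : Type*} {f : α → ℝ} (hf : Bd f) (e : β → α) : Bd (fun b => f (e b)) := by
  obtain ⟨M, hM⟩ := hf
  exact ⟨M, fun a => hM _⟩

lemma Bd.ind {α : Type*} (S : Set α) : Bd (S.indicator (fun _ => (1 : ℝ))) := by
  refine ⟨1, fun a => ?_⟩
  by_cases h : a ∈ S <;> simp [h]

lemma Ex_add {α : Type*} {p f g : α → ℝ} (hp : IsWt p) (hf : Bd f) (hg : Bd g) :
    Ex p (fun a => f a + g a) = Ex p f + Ex p g := by
  unfold Ex
  rw [← (hf.summable hp).tsum_add (hg.summable hp)]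
  simp only [mul_add]

lemma Ex_sub {α : Type*} {p f g : α → ℝ} (hp : IsWt p) (hf : Bd f) (hg : Bd g) :
    Ex p (fun a => f a - g a) = Ex p f - Ex p g := by
  unfold Ex
  rw [← (hf.summable hp).tsum_sub (hg.summable hp)]
  simp only [mul_sub]

lemma Ex_const_mul {α : Type*} {p g : α → ℝ} (c : ℝ) :
    Ex p (fun a => c * g a) = c * Ex p g := by
  unfold Ex
  rw [← tsum_mul_left]
  congr 1; ext a; ring

lemma Ex_mul_const {α : Type*} {p g : α → ℝ} (c : ℝ) :
    Ex p (fun a => g a * c) = Ex p g * c := by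
  unfold Ex
  rw [← tsum_mul_right]
  congr 1; ext a; ring

lemma Ex_const {α : Type*} {p : α → ℝ} (hp : IsWt p) (c : ℝ) : Ex p (fun _ => c) = c := by
  unfold Ex
  rw [tsum_mul_right, hp.2.tsum_eq, one_mul]

lemma Ex_mono {α : Type*} {p f g : α → ℝ} (hp : IsWt p) (hf : Bd f) (hg : Bd g)
    (h : ∀ a, f a ≤ g a) : Ex p f ≤ Ex p g :=
  (hf.summable hp).tsum_le_tsum (fun a => mul_le_mul_of_nonneg_left (h a) (hp.1 a))
    (hg.summable hp)

lemma Ex_sum {α ι : Type*} {p : α → ℝ} (hp : IsWt p) (s : Finset ι) {f : ι → α → ℝ}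
    (hf : ∀ i, Bd (f i)) : Ex p (fun a => ∑ i ∈ s, f i a) = ∑ i ∈ s, Ex p (f i) := by
  unfold Ex
  rw [← Summable.tsum_finsetSum (fun i _ => (hf i).summable hp)]
  simp only [Finset.mul_sum]

lemma Ex_abs_le {α : Type*} {p g : α → ℝ} (hp : IsWt p) {M : ℝ} (hM : ∀ a, |g a| ≤ M) :
    |Ex p g| ≤ M := by
  have hb : Bd g := ⟨M, hM⟩
  rw [abs_le]
  constructor
  · have := Ex_mono hp (Bd.const (-M)) hb (fun a => (abs_le.1 (hM a)).1)
    rwa [Ex_const hp] at this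
  · have := Ex_mono hp hb (Bd.const M) (fun a => (abs_le.1 (hM a)).2)
    rwa [Ex_const hp] at this

lemma isWt_bind {α β : Type*} {p : α → ℝ} {k : α → β → ℝ} (hp : IsWt p) (hk : ∀ a, IsWt (k a)) :
    IsWt (fun ω : α × β => p ω.1 * k ω.1 ω.2) := by
  have hnn : ∀ ω : α × β, 0 ≤ p ω.1 * k ω.1 ω.2 := fun ω => mul_nonneg (hp.1 _) ((hk _).1 _)
  have hs : Summable (fun ω : α × β => p ω.1 * k ω.1 ω.2) := by
    refine (summable_prod_of_nonneg hnn).2 ⟨fun a => ?_, ?_⟩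
    · show Summable (fun b => p a * k a b)
      exact Summable.mul_left (p a) (hk a).2.summable
    have he : (fun a => ∑' b, p a * k a b) = p := by
      ext a
      rw [tsum_mul_left, (hk a).2.tsum_eq, mul_one]
    show Summable (fun a => ∑' b, p a * k a b)
    rw [he]
    exact hp.2.summable
  refine ⟨hnn, ?_⟩
  have he : (fun a => ∑' b, p a * k a b) = p := by
    ext a
    rw [tsum_mul_left, (hk a).2.tsum_eq, mul_one]
  have h1 : ∑' ω : α × β, p ω.1 * k ω.1 ω.2 = ∑' a, ∑' b, p a * k a b := hs.tsum_prod
  rw [he, hp.2.tsum_eq] at h1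
  rw [← h1]
  exact hs.hasSum

lemma Ex_bind {α β : Type*} {p : α → ℝ} {k : α → β → ℝ} (hp : IsWt p) (hk : ∀ a, IsWt (k a))
    {g : α × β → ℝ} (hg : Bd g) :
    Ex (fun ω : α × β => p ω.1 * k ω.1 ω.2) g = Ex p (fun a => Ex (k a) (fun b => g (a, b))) := by
  unfold Ex
  rw [(hg.summable (isWt_bind hp hk)).tsum_prod]
  simp only [← tsum_mul_left, mul_assoc]

lemma Ex_comm {α β : Type*} {p : α → ℝ} {k : β → ℝ} (hp : IsWt p) (hk : IsWt k)
    {g : α × β → ℝ} (hg : Bd g) :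
    Ex p (fun a => Ex k (fun b => g (a, b))) = Ex k (fun b => Ex p (fun a => g (a, b))) := by
  have h := hg.summable (isWt_bind hp (fun _ => hk))
  unfold Ex
  simp only [← tsum_mul_left]
  have h' : Summable (Function.uncurry (fun a b => p a * (k b * g (a, b)))) := by
    convert h using 2
    simp [Function.uncurry, mul_assoc]
  rw [← h'.tsum_comm]
  congr 1; ext b; congr 1; ext a; ring

lemma dp_fun {β : Type*} {p q : β → ℝ} (hp : IsWt p) (hq : IsWt q) {e δ : ℝ}
    (h : ∀ O : Set β, Ex p (O.indicator fun _ => 1) ≤ e * Ex q (O.indicator fun _ => 1) + δ)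
    {g : β → ℝ} {M : ℝ} (hM : 0 ≤ M) (h0 : ∀ b, 0 ≤ g b) (h1 : ∀ b, g b ≤ M) :
    Ex p g ≤ e * Ex q g + δ * M := by
  have hg : Bd g := ⟨M, fun b => by rw [abs_of_nonneg (h0 b)]; exact h1 b⟩
  set O : Set β := {b | e * q b < p b} with hO
  have hi := Bd.ind O
  have key : Ex p g - e * Ex q g ≤
      M * (Ex p (O.indicator fun _ => 1) - e * Ex q (O.indicator fun _ => 1)) := by
    unfold Ex
    rw [← tsum_mul_left, ← tsum_mul_left, ← (hg.summable hp).tsum_sub ((hg.summable hq).mul_left e),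
      ← (hi.summable hp).tsum_sub ((hi.summable hq).mul_left e), ← tsum_mul_left]
    refine Summable.tsum_le_tsum ?_ ((hg.summable hp).sub ((hg.summable hq).mul_left e))
      (((hi.summable hp).sub ((hi.summable hq).mul_left e)).mul_left M)
    intro b
    by_cases hb : b ∈ O
    · have hb' : e * q b < p b := hb
      simp only [hb, Set.indicator_of_mem]
      nlinarith [h1 b]
    · have hb' : p b ≤ e * q b := not_lt.1 hb
      simp only [hb, Set.indicator_of_notMem, not_false_eq_true]
      nlinarith [h0 b]
  have := mul_le_mul_of_nonneg_left (h O) hM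
  nlinarith

/-- swap coordinate `i` of a pair of datasets. -/
def swp {X : Type*} {n : ℕ} (i : Fin n) (p : (Fin n → X) × (Fin n → X)) :
    (Fin n → X) × (Fin n → X) :=
  (fun j => if j = i then p.2 j else p.1 j, fun j => if j = i then p.1 j else p.2 j)

lemma swp_swp {X : Type*} {n : ℕ} (i : Fin n) (p : (Fin n → X) × (Fin n → X)) :
    swp i (swp i p) = p := by
  unfold swp
  ext j <;> by_cases h : j = i <;> simp [h]

/-- hybrid dataset -/
def hyb {X : Type*} {n : ℕ} (k : ℕ) (p : (Fin n → X) × (Fin n → X)) : Fin n → X :=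
  fun j => if (j : ℕ) < k then p.2 j else p.1 j

lemma hyb_swp {X : Type*} {n : ℕ} (i : Fin n) (p : (Fin n → X) × (Fin n → X)) :
    hyb (i + 1) (swp i p) = hyb i p := by
  ext j
  unfold hyb swp
  by_cases h : j = i
  · subst h; simp
  · have h2 : (j : ℕ) ≠ i := fun h' => h (Fin.ext h')
    by_cases h3 : (j : ℕ) < i
    · have : (j : ℕ) < i + 1 := by omega
      simp [h, h3, this]
    · have : ¬ (j : ℕ) < i + 1 := by omega
      simp [h, h3, this]

lemma hyb_swp' {X : Type*} {n : ℕ} (i : Fin n) (p : (Fin n → X) × (Fin n → X)) :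
    hyb i (swp i p) = hyb (i + 1) p := by
  rw [← hyb_swp, swp_swp]

lemma hyb_nbr {X : Type*} {n : ℕ} (i : Fin n) (p : (Fin n → X) × (Fin n → X)) :
    hyb (i + 1) p = Function.update (hyb i p) i (p.2 i) := by
  ext j
  unfold hyb
  by_cases h : j = i
  · subst h; simp
  · have h2 : (j : ℕ) ≠ i := fun h' => h (Fin.ext h')
    have : (j : ℕ) < i + 1 ↔ (j : ℕ) < i := by omega
    simp [h, this]

lemma swp_nbr {X : Type*} {n : ℕ} (i : Fin n) (p : (Fin n → X) × (Fin n → X)) :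
    (swp i p).1 = Function.update p.1 i (p.2 i) := by
  ext j
  unfold swp
  by_cases h : j = i
  · subst h; simp
  · simp [h]

lemma hyb_zero {X : Type*} {n : ℕ} (p : (Fin n → X) × (Fin n → X)) : hyb 0 p = p.1 := by
  ext j; simp [hyb]

lemma hyb_n {X : Type*} {n : ℕ} (p : (Fin n → X) × (Fin n → X)) : hyb n p = p.2 := by
  ext j; simp [hyb]

lemma hyb_sum {X : Type*} {n : ℕ} (q : (Fin n → X) → ℝ) (p : (Fin n → X) × (Fin n → X)) :
    q p.2 - q p.1 = ∑ i : Fin n, (q (hyb (i + 1) p) - q (hyb i p)) := by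
  rw [Fin.sum_univ_eq_sum_range (fun i => q (hyb (i + 1) p) - q (hyb i p)) n,
    Finset.sum_range_sub (fun i => q (hyb i p)), hyb_n, hyb_zero]

/-- low sensitivity -/
def Sens {X : Type*} {n : ℕ} (Δ : ℝ) (q : (Fin n → X) → ℝ) : Prop :=
  ∀ (i : Fin n) (y : Fin n → X) (v : X), |q y - q (Function.update y i v)| ≤ Δ

lemma Sens.hyb {X : Type*} {n : ℕ} {Δ : ℝ} {q : (Fin n → X) → ℝ} (hq : Sens Δ q) (i : Fin n)
    (p : (Fin n → X) × (Fin n → X)) : |q (hyb (i + 1) p) - q (_root_.hyb i p)| ≤ Δ := by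
  rw [hyb_nbr, abs_sub_comm]
  exact hq _ _ _

lemma Sens.diff {X : Type*} {n : ℕ} {Δ : ℝ} {q : (Fin n → X) → ℝ} (hq : Sens Δ q)
    (x x' : Fin n → X) : |q x' - q x| ≤ n * Δ := by
  have := hyb_sum q (x, x')
  simp only at this
  rw [this]
  refine (Finset.abs_sum_le_sum_abs _ _).trans ?_
  refine (Finset.sum_le_sum (fun i _ => hq.hyb i (x, x'))).trans ?_
  simp

lemma Sens.bd {X : Type*} {n : ℕ} {Δ : ℝ} {q : (Fin n → X) → ℝ} (hq : Sens Δ q) : Bd q := by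
  by_cases h : Nonempty (Fin n → X)
  · obtain ⟨x0⟩ := h
    refine ⟨|q x0| + n * Δ, fun x => ?_⟩
    have h1 := hq.diff x0 x
    have h2 := abs_sub_abs_le_abs_sub (q x) (q x0)
    linarith
  · exact ⟨0, fun x => (h ⟨x⟩).elim⟩

/-- generalization gap -/
noncomputable def gap {D : Type*} (w : D → ℝ) (q : D → ℝ) (x : D) : ℝ := Ex w q - q x

lemma Sens.gap_le {X : Type*} {n : ℕ} {Δ : ℝ} {q : (Fin n → X) → ℝ} (hq : Sens Δ q)
    {w : (Fin n → X) → ℝ} (hw : IsWt w) (x : Fin n → X) : |gap w q x| ≤ n * Δ := by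
  have : gap w q x = Ex w (fun x' => q x' - q x) := by
    rw [Ex_sub hw hq.bd (Bd.const _), Ex_const hw]; rfl
  rw [this]
  exact Ex_abs_le hw (fun x' => hq.diff x x')

section core

variable {X Y : Type*} {n : ℕ}

lemma swap_ineq {w : (Fin n → X) → ℝ} (hw : IsWt w) {a : (Fin n → X) → Y → ℝ}
    (ha : ∀ x, IsWt (a x)) {e δ : ℝ} (i : Fin n)
    (hsym : ∀ p : (Fin n → X) × (Fin n → X), w (swp i p).1 * w (swp i p).2 = w p.1 * w p.2)
    (hdp : ∀ x x' : Fin n → X, Neighbor x x' → ∀ O : Set Y,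
      Ex (a x) (O.indicator fun _ => 1) ≤ e * Ex (a x') (O.indicator fun _ => 1) + δ)
    {g : ((Fin n → X) × (Fin n → X)) × Y → ℝ} {M : ℝ} (hM : 0 ≤ M) (h0 : ∀ ω, 0 ≤ g ω)
    (h1 : ∀ ω, g ω ≤ M) :
    Ex (fun ω : ((Fin n → X) × (Fin n → X)) × Y => (w ω.1.1 * w ω.1.2) * a ω.1.1 ω.2) g ≤
      e * Ex (fun ω : ((Fin n → X) × (Fin n → X)) × Y => (w ω.1.1 * w ω.1.2) * a ω.1.1 ω.2)
        (fun ω => g (swp i ω.1, ω.2)) + δ * M := by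
  have hw2 : IsWt (fun p : (Fin n → X) × (Fin n → X) => w p.1 * w p.2) :=
    isWt_bind hw (fun _ => hw)
  have habs : ∀ ω, |g ω| ≤ M := fun ω => by rw [abs_of_nonneg (h0 ω)]; exact h1 ω
  have hg : Bd g := ⟨M, habs⟩
  rw [Ex_bind hw2 (k := fun p => a p.1) (fun p => ha p.1) hg,
    Ex_bind hw2 (k := fun p => a p.1) (fun p => ha p.1) (g := fun ω => g (swp i ω.1, ω.2))
      (hg.comp _)]
  have hre : Ex (fun p : (Fin n → X) × (Fin n → X) => w p.1 * w p.2)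
        (fun p => Ex (a p.1) (fun y => g (swp i p, y))) =
      Ex (fun p : (Fin n → X) × (Fin n → X) => w p.1 * w p.2)
        (fun p => Ex (a (swp i p).1) (fun y => g (p, y))) := by
    let E : Equiv.Perm ((Fin n → X) × (Fin n → X)) := ⟨swp i, swp i, swp_swp i, swp_swp i⟩
    unfold Ex
    rw [← E.tsum_eq]
    refine tsum_congr fun p => ?_
    show w (swp i p).1 * w (swp i p).2 * (∑' y, a (swp i p).1 y * g (swp i (swp i p), y)) = _
    rw [hsym, swp_swp]
  rw [hre, ← Ex_const_mul, ← Ex_const hw2 (δ * M)]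
  have b1 : ∀ f : (Fin n → X) × (Fin n → X) → (Fin n → X),
      Bd (fun p => Ex (a (f p)) (fun y => g (p, y))) := fun f =>
    ⟨M, fun p => Ex_abs_le (ha _) (fun y => habs _)⟩
  have b2 := (Bd.const e).mul (b1 (fun p => (swp i p).1))
  rw [← Ex_add hw2 b2 (Bd.const _)]
  refine Ex_mono hw2 (b1 fun p => p.1) (b2.add (Bd.const _)) fun p => ?_
  refine dp_fun (ha _) (ha _) (hdp _ _ ⟨i, fun j hj => ?_⟩) hM (fun y => h0 _) (fun y => h1 _)
  simp [swp, hj]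

lemma core_ineq {w : (Fin n → X) → ℝ} (hw : IsWt w) {a : (Fin n → X) → Y → ℝ}
    (ha : ∀ x, IsWt (a x)) {ε δ Δ lam K : ℝ} (hΔ : 0 < Δ) (hε : 0 < ε) (hlam : 0 < lam)
    (hsym : ∀ i, ∀ p : (Fin n → X) × (Fin n → X),
      w (swp i p).1 * w (swp i p).2 = w p.1 * w p.2)
    (hdp : ∀ x x' : Fin n → X, Neighbor x x' → ∀ O : Set Y,
      Ex (a x) (O.indicator fun _ => 1) ≤ Real.exp ε * Ex (a x') (O.indicator fun _ => 1) + δ)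
    (F : Y → (Fin n → X) → ℝ) (hF : ∀ y, Sens Δ (F y)) :
    Ex (fun ω : (Fin n → X) × Y => w ω.1 * a ω.1 ω.2)
      (fun ω => gap w (F ω.2) ω.1 * Real.exp (lam * min (gap w (F ω.2) ω.1) K)) ≤
    n * ((Real.exp (ε + lam * Δ) - 1) * Δ * Ex (fun ω : (Fin n → X) × Y => w ω.1 * a ω.1 ω.2)
      (fun ω => Real.exp (lam * min (gap w (F ω.2) ω.1) K)) + δ * (Δ * Real.exp (lam * K))) := by
  set φ : (Fin n → X) × Y → ℝ := fun ω => Real.exp (lam * min (gap w (F ω.2) ω.1) K) with hφ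
  have φ0 : ∀ ω, 0 ≤ φ ω := fun ω => (Real.exp_pos _).le
  have φ1 : ∀ ω, φ ω ≤ Real.exp (lam * K) := fun ω =>
    Real.exp_le_exp.2 (mul_le_mul_of_nonneg_left (min_le_right _ _) hlam.le)
  have φB : Bd φ := ⟨_, fun ω => by rw [abs_of_nonneg (φ0 ω)]; exact φ1 ω⟩
  have hw2 : IsWt (fun p : (Fin n → X) × (Fin n → X) => w p.1 * w p.2) :=
    isWt_bind hw (fun _ => hw)
  set W : ((Fin n → X) × (Fin n → X)) × Y → ℝ :=
    fun ω => (w ω.1.1 * w ω.1.2) * a ω.1.1 ω.2 with hW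
  have hWt : IsWt W := isWt_bind hw2 (k := fun p => a p.1) (fun p => ha p.1)
  -- reduction to the doubled space
  have red : ∀ g : ((Fin n → X) × (Fin n → X)) × Y → ℝ, Bd g →
      Ex W g = Ex (fun ω : (Fin n → X) × Y => w ω.1 * a ω.1 ω.2)
        (fun ω => Ex w (fun x' => g ((ω.1, x'), ω.2))) := by
    intro g hg
    obtain ⟨M, hM⟩ := hg
    have hg : Bd g := ⟨M, hM⟩
    rw [hW, Ex_bind hw2 (k := fun p => a p.1) (fun p => ha p.1) hg,
      Ex_bind hw (fun _ => hw) (g := fun p => Ex (a p.1) fun y => g (p, y))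
        ⟨M, fun p => Ex_abs_le (ha _) (fun y => hM _)⟩,
      Ex_bind hw ha (g := fun ω => Ex w (fun x' => g ((ω.1, x'), ω.2)))
        ⟨M, fun p => Ex_abs_le hw (fun y => hM _)⟩]
    congr 1; ext x
    exact Ex_comm hw (ha x) (g := fun q => g ((x, q.1), q.2)) (hg.comp _)
  have dB : Bd (fun ω : ((Fin n → X) × (Fin n → X)) × Y => F ω.2 ω.1.2 - F ω.2 ω.1.1) :=
    ⟨n * Δ, fun ω => (hF _).diff _ _⟩
  have φB2 : Bd (fun ω : ((Fin n → X) × (Fin n → X)) × Y => φ (ω.1.1, ω.2)) := φB.comp _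
  have e1 : Ex (fun ω : (Fin n → X) × Y => w ω.1 * a ω.1 ω.2)
      (fun ω => gap w (F ω.2) ω.1 * φ ω) =
      Ex W (fun ω => (F ω.2 ω.1.2 - F ω.2 ω.1.1) * φ (ω.1.1, ω.2)) := by
    rw [red _ (dB.mul φB2)]
    congr 1; ext ω
    simp only
    rw [Ex_mul_const, Ex_sub hw (hF _).bd (Bd.const _), Ex_const hw]
    rfl
  have e2 : Ex (fun ω : (Fin n → X) × Y => w ω.1 * a ω.1 ω.2) φ =
      Ex W (fun ω => φ (ω.1.1, ω.2)) := by
    rw [red _ φB2]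
    congr 1; ext ω
    simp only [Ex_const hw]
  rw [e1, e2]
  let d : Fin n → ((Fin n → X) × (Fin n → X)) × Y → ℝ := fun i ω =>
    F ω.2 (hyb (i + 1) ω.1) - F ω.2 (hyb i ω.1)
  have d1 : ∀ i ω, |d i ω| ≤ Δ := fun i ω => (hF _).hyb i ω.1
  have hdB : ∀ i, Bd (d i) := fun i => ⟨Δ, d1 i⟩
  have e3 : Ex W (fun ω => (F ω.2 ω.1.2 - F ω.2 ω.1.1) * φ (ω.1.1, ω.2)) =
      ∑ i : Fin n, Ex W (fun ω => d i ω * φ (ω.1.1, ω.2)) := by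
    rw [← Ex_sum hWt _ (fun i => (hdB i).mul φB2)]
    congr 1; ext ω
    rw [hyb_sum (F ω.2) ω.1, Finset.sum_mul]
  rw [e3]
  have main : ∀ i : Fin n, Ex W (fun ω => d i ω * φ (ω.1.1, ω.2)) ≤
      (Real.exp (ε + lam * Δ) - 1) * Δ * Ex W (fun ω => φ (ω.1.1, ω.2)) +
        δ * (Δ * Real.exp (lam * K)) := by
    intro i
    have pB : Bd (fun ω => max (d i ω) 0 * φ (ω.1.1, ω.2)) :=
      Bd.mul ⟨Δ, fun ω => by
        rw [abs_of_nonneg (le_max_right _ _)]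
        exact max_le ((le_abs_self _).trans (d1 i ω)) hΔ.le⟩ φB2
    have nB : Bd (fun ω => max (- d i ω) 0 * φ (ω.1.1, ω.2)) :=
      Bd.mul ⟨Δ, fun ω => by
        rw [abs_of_nonneg (le_max_right _ _)]
        exact max_le ((neg_le_abs _).trans (d1 i ω)) hΔ.le⟩ φB2
    have split : Ex W (fun ω => d i ω * φ (ω.1.1, ω.2)) =
        Ex W (fun ω => max (d i ω) 0 * φ (ω.1.1, ω.2)) -
        Ex W (fun ω => max (- d i ω) 0 * φ (ω.1.1, ω.2)) := by
      rw [← Ex_sub hWt pB nB]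
      congr 1; ext ω
      rw [← sub_mul]
      congr 1
      rcases le_total (d i ω) 0 with h | h
      · rw [max_eq_right h, max_eq_left (by linarith)]; ring
      · rw [max_eq_left h, max_eq_right (by linarith)]; ring
    have sw := swap_ineq hw ha (e := Real.exp ε) (δ := δ) i (hsym i) hdp
      (g := fun ω => max (d i ω) 0 * φ (ω.1.1, ω.2)) (M := Δ * Real.exp (lam * K))
      (by positivity) (fun ω => mul_nonneg (le_max_right _ _) (φ0 _))
      (fun ω => mul_le_mul (max_le ((le_abs_self _).trans (d1 i ω)) hΔ.le) (φ1 _) (φ0 _) hΔ.le)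
    have sw2 : Ex W (fun ω : ((Fin n → X) × (Fin n → X)) × Y => max (d i (swp i ω.1, ω.2)) 0 * φ ((swp i ω.1).1, ω.2)) ≤
        Real.exp (lam * Δ) * Ex W (fun ω => max (- d i ω) 0 * φ (ω.1.1, ω.2)) := by
      rw [← Ex_const_mul]
      refine Ex_mono hWt (pB.comp (fun ω : ((Fin n → X) × (Fin n → X)) × Y => (swp i ω.1, ω.2))) ((Bd.const _).mul nB) fun ω => ?_
      have h1 : d i (swp i ω.1, ω.2) = - d i ω := by
        simp only [d, hyb_swp, hyb_swp']; ring
      rw [h1]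
      have h2 : φ ((swp i ω.1).1, ω.2) ≤ Real.exp (lam * Δ) * φ (ω.1.1, ω.2) := by
        simp only [hφ]
        rw [← Real.exp_add]
        apply Real.exp_le_exp.2
        rw [← mul_add]
        apply mul_le_mul_of_nonneg_left _ hlam.le
        have h3 : gap w (F ω.2) (swp i ω.1).1 ≤ Δ + gap w (F ω.2) ω.1.1 := by
          unfold gap
          rw [swp_nbr]
          have := (abs_le.1 (hF ω.2 i ω.1.1 (ω.1.2 i))).2
          linarith
        rcases le_total (gap w (F ω.2) ω.1.1) K with h | h
        · rw [min_eq_left h]; exact (min_le_left _ _).trans h3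
        · rw [min_eq_right h]; exact (min_le_right _ _).trans (by linarith)
      calc _ ≤ max (- d i ω) 0 * (Real.exp (lam * Δ) * φ (ω.1.1, ω.2)) :=
            mul_le_mul_of_nonneg_left h2 (le_max_right _ _)
        _ = _ := by ring
    have nle : Ex W (fun ω => max (- d i ω) 0 * φ (ω.1.1, ω.2)) ≤
        Δ * Ex W (fun ω => φ (ω.1.1, ω.2)) := by
      rw [← Ex_const_mul]
      exact Ex_mono hWt nB ((Bd.const _).mul φB2) fun ω =>
        mul_le_mul_of_nonneg_right (max_le ((neg_le_abs _).trans (d1 i ω)) hΔ.le) (φ0 _)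
    rw [split]
    have s3 := mul_le_mul_of_nonneg_left sw2 (Real.exp_pos ε).le
    rw [← mul_assoc, ← Real.exp_add] at s3
    have hE : 0 ≤ Real.exp (ε + lam * Δ) - 1 := by
      have := Real.one_le_exp (x := ε + lam * Δ) (by positivity)
      linarith
    have s4 := mul_le_mul_of_nonneg_left nle hE
    simp only at sw
    nlinarith
  refine (Finset.sum_le_sum (fun i _ => main i)).trans ?_
  simp [mul_add]

lemma tail_bound {w : (Fin n → X) → ℝ} (hw : IsWt w) {a : (Fin n → X) → Y → ℝ}
    (ha : ∀ x, IsWt (a x)) {ε δ Δ : ℝ} (hΔ : 0 < Δ) (hε : 0 < ε) (hε1 : ε < 1) (hδ : 0 < δ)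
    (hL : 4 ≤ Real.log (ε / δ)) (hn : Real.log (ε / δ) / ε ^ 2 ≤ (n : ℝ))
    (hsym : ∀ i, ∀ p : (Fin n → X) × (Fin n → X),
      w (swp i p).1 * w (swp i p).2 = w p.1 * w p.2)
    (hdp : ∀ x x' : Fin n → X, Neighbor x x' → ∀ O : Set Y,
      Ex (a x) (O.indicator fun _ => 1) ≤ Real.exp ε * Ex (a x') (O.indicator fun _ => 1) + δ)
    (F : Y → (Fin n → X) → ℝ) (hF : ∀ y, Sens Δ (F y)) :
    Ex (fun ω : (Fin n → X) × Y => w ω.1 * a ω.1 ω.2)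
      ({ω | 16 * ε * Δ * n ≤ gap w (F ω.2) ω.1}.indicator fun _ => 1) ≤ 3 / 8 * (δ / ε) := by
  set L := Real.log (ε / δ) with hLd
  have hn0 : (0 : ℝ) < n := lt_of_lt_of_le (by positivity) hn
  set m : ℝ := 8 * ε * Δ * n with hm
  set K : ℝ := 16 * ε * Δ * n with hK
  set lam : ℝ := L / (8 * ε * Δ * n) with hlamd
  have hm0 : 0 < m := by positivity
  have hlam : 0 < lam := by positivity
  have hlamm : lam * m = L := by rw [hlamd, hm]; field_simp
  have hKm : K = m + m := by rw [hK, hm]; ring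
  have hlamΔ : lam * Δ ≤ ε := by
    have h1 : lam * Δ = L / (8 * ε * n) := by rw [hlamd]; field_simp
    rw [h1, div_le_iff₀ (by positivity)]
    rw [div_le_iff₀ (by positivity)] at hn
    nlinarith [mul_pos hn0 (pow_pos hε 2)]
  have hexp : Real.exp (ε + lam * Δ) - 1 ≤ 8 * ε := by
    have h1 : Real.exp (ε + lam * Δ) ≤ Real.exp (2 * ε) := Real.exp_le_exp.2 (by linarith)
    have h2 := convexOn_exp.2 (Set.mem_univ 0) (Set.mem_univ 2) (by linarith : 0 ≤ 1 - ε) hε.le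
      (by ring)
    simp only [smul_eq_mul, mul_zero, zero_add, Real.exp_zero, mul_one] at h2
    have h3 : Real.exp 2 ≤ 9 := by
      have : Real.exp 2 = Real.exp 1 * Real.exp 1 := by rw [← Real.exp_add]; norm_num
      rw [this]
      nlinarith [Real.exp_one_lt_d9, Real.exp_pos 1]
    rw [mul_comm 2 ε] at h1
    nlinarith
  have core := core_ineq hw ha (K := K) hΔ hε hlam hsym hdp F hF
  have hW1 : IsWt (fun ω : (Fin n → X) × Y => w ω.1 * a ω.1 ω.2) := isWt_bind hw ha
  set W1 := (fun ω : (Fin n → X) × Y => w ω.1 * a ω.1 ω.2)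
  set S : Set ((Fin n → X) × Y) := {ω | K ≤ gap w (F ω.2) ω.1} with hS
  set φ : (Fin n → X) × Y → ℝ := fun ω => Real.exp (lam * min (gap w (F ω.2) ω.1) K) with hφ
  have φ0 : ∀ ω, 0 ≤ φ ω := fun ω => (Real.exp_pos _).le
  have φB : Bd φ := ⟨Real.exp (lam * K), fun ω => by
    rw [abs_of_nonneg (φ0 ω)]
    exact Real.exp_le_exp.2 (mul_le_mul_of_nonneg_left (min_le_right _ _) hlam.le)⟩
  have zB : Bd (fun ω : (Fin n → X) × Y => gap w (F ω.2) ω.1) :=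
    ⟨n * Δ, fun ω => (hF _).gap_le hw _⟩
  have φE : 0 ≤ Ex W1 φ := by
    have := Ex_mono hW1 (Bd.const 0) φB φ0
    rwa [Ex_const hW1] at this
  have low : Ex W1 (fun ω => m * Real.exp (lam * K) * S.indicator (fun _ => 1) ω -
      Real.exp (lam * m) / lam) ≤ Ex W1 (fun ω => gap w (F ω.2) ω.1 * φ ω - m * φ ω) := by
    refine Ex_mono hW1 (((Bd.const _).mul (Bd.ind S)).sub (Bd.const _))
      ((zB.mul φB).sub ((Bd.const _).mul φB)) fun ω => ?_
    rw [← sub_mul]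
    have hpos : 0 < Real.exp (lam * m) / lam := by positivity
    by_cases h : ω ∈ S
    · have h' : K ≤ gap w (F ω.2) ω.1 := h
      simp only [h, Set.indicator_of_mem, hφ, min_eq_right h', mul_one]
      have : m * Real.exp (lam * K) ≤ (gap w (F ω.2) ω.1 - m) * Real.exp (lam * K) :=
        mul_le_mul_of_nonneg_right (by linarith) (Real.exp_pos _).le
      linarith
    · have h' : gap w (F ω.2) ω.1 < K := not_le.1 h
      simp only [h, Set.indicator_of_notMem, hφ, min_eq_left h'.le, mul_zero, not_false_eq_true]
      set z := gap w (F ω.2) ω.1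
      have h1 : lam * (m - z) ≤ Real.exp (lam * (m - z)) := by
        have := Real.add_one_le_exp (lam * (m - z)); linarith
      have h2 : Real.exp (lam * m) = Real.exp (lam * (m - z)) * Real.exp (lam * z) := by
        rw [← Real.exp_add]; congr 1; ring
      have h3 := mul_le_mul_of_nonneg_right h1 (Real.exp_pos (lam * z)).le
      rw [← h2] at h3
      have h4 : (m - z) * Real.exp (lam * z) ≤ Real.exp (lam * m) / lam := by
        rw [le_div_iff₀ hlam]; linarith
      linarith
  rw [Ex_sub hW1 ((Bd.const _).mul (Bd.ind S)) (Bd.const _), Ex_const hW1,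
    Ex_sub hW1 (zB.mul φB) ((Bd.const _).mul φB), Ex_const_mul, Ex_const_mul] at low
  set Pr := Ex W1 (S.indicator fun _ => 1)
  have c2 : n * ((Real.exp (ε + lam * Δ) - 1) * Δ * Ex W1 φ) ≤ m * Ex W1 φ := by
    have := mul_le_mul_of_nonneg_right hexp (mul_nonneg (mul_nonneg hn0.le hΔ.le) φE)
    rw [hm]; nlinarith
  have fin : m * Real.exp (lam * K) * Pr ≤
      n * (δ * (Δ * Real.exp (lam * K))) + Real.exp (lam * m) / lam := by
    rw [mul_add] at core
    linarith
  have hKexp : Real.exp (lam * K) = (ε / δ) * (ε / δ) := by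
    rw [hKm, mul_add, hlamm, Real.exp_add, hLd, Real.exp_log (by positivity)]
  have hmexp : Real.exp (lam * m) = ε / δ := by
    rw [hlamm, hLd, Real.exp_log (by positivity)]
  rw [hKexp, hmexp] at fin
  have hlaminv : (ε / δ) / lam = (ε / δ) * (m / L) := by
    rw [← hlamm]; field_simp
  have hmL : m / L ≤ m / 4 := div_le_div_of_nonneg_left hm0.le (by norm_num) hL
  have hr : 0 < ε / δ := by positivity
  have h5 := mul_le_mul_of_nonneg_left hmL hr.le
  rw [hlaminv] at fin
  have h6 : m * ((ε / δ) * (ε / δ)) * Pr ≤ m * ((ε / δ) * (ε / δ)) * (3 / 8 * (δ / ε)) := by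
    refine (fin.trans (add_le_add le_rfl h5)).trans (le_of_eq ?_)
    rw [hm]; field_simp; norm_num
  exact le_of_mul_le_mul_left h6 (by positivity)

end core

lemma iid_apply {X : Type*} (P : PMF X) (n : ℕ) (x : Fin n → X) :
    iidPMF P n x = ∏ i, P (x i) := by
  induction n with
  | zero =>
    have : x = fun i => i.elim0 := Subsingleton.elim _ _
    subst this
    simp [iidPMF]
  | succ n ih =>
    classical
    rw [iidPMF, PMF.bind_apply, tsum_eq_single (x 0)]
    · rw [PMF.map_apply, tsum_eq_single (Fin.tail x)]
      · rw [Fin.cons_self_tail, if_pos rfl, ih, Fin.prod_univ_succ]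
        rfl
      · intro y hy
        rw [if_neg]
        intro h
        apply hy
        rw [h, Fin.tail_cons]
    · intro b hb
      rw [PMF.map_apply, ENNReal.tsum_eq_zero.2, mul_zero]
      intro y
      rw [if_neg]
      intro h
      apply hb
      rw [h, Fin.cons_zero]

lemma joint_apply {D Y : Type*} (μ : PMF D) (A : D → PMF Y) (ω : D × Y) :
    jointPMF μ A ω = μ ω.1 * A ω.1 ω.2 := by
  classical
  obtain ⟨x, y⟩ := ω
  rw [jointPMF, PMF.bind_apply, tsum_eq_single x]
  · rw [PMF.map_apply, tsum_eq_single y]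
    · simp
    · intro b hb
      rw [if_neg]
      intro h
      exact hb (Prod.ext_iff.1 h).2.symm
  · intro b hb
    rw [PMF.map_apply, ENNReal.tsum_eq_zero.2, mul_zero]
    intro z
    rw [if_neg]
    intro h
    exact hb (Prod.ext_iff.1 h).1.symm

lemma pmf_isWt {α : Type*} (μ : PMF α) : IsWt (fun a => (μ a).toReal) := by
  refine ⟨fun a => ENNReal.toReal_nonneg, ?_⟩
  have h := ENNReal.hasSum_toReal (f := fun a => μ a) μ.tsum_coe_ne_top
  rw [← ENNReal.tsum_toReal_eq (fun a => μ.apply_ne_top a), μ.tsum_coe] at h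
  simpa using h

lemma prob_eq {α : Type*} (μ : PMF α) (S : Set α) :
    prob μ S = Ex (fun a => (μ a).toReal) (S.indicator fun _ => 1) := by
  unfold prob Ex
  rw [PMF.toOuterMeasure_apply, ENNReal.tsum_toReal_eq]
  · congr 1; ext a
    by_cases h : a ∈ S <;> simp [h]
  · intro a
    by_cases h : a ∈ S <;> simp [h, μ.apply_ne_top]

/-- **Theorem D.1.**  There exist absolute constants `C, c, c' > 0` such that:
for every `ε ∈ (0,1)`, `δ` with `0 < δ ≤ c·ε⁵`, and `n ≥ c'·log(ε/δ)/ε²`, if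
`A : X^n → Y` is an `(ε,δ)`-differentially private algorithm whose outputs are `Δ`-sensitive
functions `q : X^n → ℝ`, and `X ∼ P^n`, then
`Pr_{X,A}[|q(P^n) - q(X)| ≥ C·ε·Δ·n] < n·√(δ/ε)`, where `q(P^n) = E_{X' ∼ P^n}[q(X')]`. -/
theorem stmt_18 : ∃ C c c' : ℝ, 0 < C ∧ 0 < c ∧ 0 < c' ∧
    ∀ (X : Type) [Countable X] (n : ℕ) (ε δ Δ : ℝ)
      (A : (Fin n → X) → PMF ((Fin n → X) → ℝ)),
      0 < ε → ε < 1 → 0 < δ → δ ≤ c * ε ^ 5 → c' * Real.log (ε / δ) / ε ^ 2 ≤ (n : ℝ) →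
      0 < Δ →
      (∀ (x : Fin n → X) (q : (Fin n → X) → ℝ), q ∈ (A x).support →
        ∀ (i : Fin n) (y : Fin n → X) (v : X),
          |q y - q (Function.update y i v)| ≤ Δ) →
      DiffPrivate A ε δ →
      ∀ P : PMF X,
        prob (jointPMF (iidPMF P n) A)
            {p | C * ε * Δ * n ≤
                   |(∑' x : Fin n → X, ((iidPMF P n) x).toReal * p.2 x) - p.2 p.1|} <
          (n : ℝ) * Real.sqrt (δ / ε) := by
  refine ⟨16, Real.exp (-4), 1, by norm_num, Real.exp_pos _, one_pos, ?_⟩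
  intro X _ n ε δ Δ A hε hε1 hδ hδc hn hΔ hA hdp P
  classical
  have hL : 4 ≤ Real.log (ε / δ) := by
    rw [Real.le_log_iff_exp_le (by positivity), le_div_iff₀ hδ]
    have h1 : δ ≤ Real.exp (-4) * ε := by
      refine hδc.trans (mul_le_mul_of_nonneg_left ?_ (Real.exp_pos _).le)
      exact pow_le_of_le_one hε.le hε1.le (by norm_num)
    calc Real.exp 4 * δ ≤ Real.exp 4 * (Real.exp (-4) * ε) :=
          mul_le_mul_of_nonneg_left h1 (Real.exp_pos _).le
      _ = ε := by rw [← mul_assoc, ← Real.exp_add]; simp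
  rw [one_mul] at hn
  set w : (Fin n → X) → ℝ := fun x => (iidPMF P n x).toReal with hwd
  have hw : IsWt w := pmf_isWt _
  set a : (Fin n → X) → ((Fin n → X) → ℝ) → ℝ := fun x y => (A x y).toReal with had
  have ha : ∀ x, IsWt (a x) := fun x => pmf_isWt _
  have hsym : ∀ i, ∀ p : (Fin n → X) × (Fin n → X),
      w (swp i p).1 * w (swp i p).2 = w p.1 * w p.2 := by
    intro i p
    simp only [hwd, iid_apply, ← ENNReal.toReal_mul, ← Finset.prod_mul_distrib]
    congr 1
    refine Finset.prod_congr rfl fun j _ => ?_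
    unfold swp
    by_cases h : j = i
    · simp [h, mul_comm]
    · simp [h]
  have hdp' : ∀ x x' : Fin n → X, Neighbor x x' → ∀ O : Set ((Fin n → X) → ℝ),
      Ex (a x) (O.indicator fun _ => 1) ≤
        Real.exp ε * Ex (a x') (O.indicator fun _ => 1) + δ := by
    intro x x' hx O
    have := hdp x x' hx O
    rwa [prob_eq, prob_eq] at this
  let F : ((Fin n → X) → ℝ) → (Fin n → X) → ℝ := fun q => if Sens Δ q then q else fun _ => 0
  have hF : ∀ y, Sens Δ (F y) := by
    intro y
    by_cases h : Sens Δ y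
    · simp only [F, if_pos h]; exact h
    · simp only [F, if_neg h]
      intro i y v
      simpa using hΔ.le
  have hF' : ∀ y, Sens Δ (fun x => - F y x) := by
    intro y i z v
    have := hF y i z v
    rw [← abs_neg]
    convert this using 2
    ring
  have t1 := tail_bound hw ha hΔ hε hε1 hδ hL hn hsym hdp' F hF
  have t2 := tail_bound hw ha hΔ hε hε1 hδ hL hn hsym hdp' (fun y x => - F y x) hF'
  have hW1 : IsWt (fun ω : (Fin n → X) × ((Fin n → X) → ℝ) => w ω.1 * a ω.1 ω.2) :=
    isWt_bind hw ha
  set S1 := {ω : (Fin n → X) × ((Fin n → X) → ℝ) | 16 * ε * Δ * n ≤ gap w (F ω.2) ω.1}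
  set S2 := {ω : (Fin n → X) × ((Fin n → X) → ℝ) |
    16 * ε * Δ * n ≤ gap w (fun x => - F ω.2 x) ω.1}
  have hle : prob (jointPMF (iidPMF P n) A)
      {p | 16 * ε * Δ * n ≤
        |(∑' x : Fin n → X, ((iidPMF P n) x).toReal * p.2 x) - p.2 p.1|} ≤
      Ex (fun ω : (Fin n → X) × ((Fin n → X) → ℝ) => w ω.1 * a ω.1 ω.2)
        (S1.indicator fun _ => 1) +
      Ex (fun ω : (Fin n → X) × ((Fin n → X) → ℝ) => w ω.1 * a ω.1 ω.2)
        (S2.indicator fun _ => 1) := by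
    rw [prob_eq, ← Ex_add hW1 (Bd.ind S1) (Bd.ind S2)]
    have hj : (fun ω => (jointPMF (iidPMF P n) A ω).toReal) =
        (fun ω : (Fin n → X) × ((Fin n → X) → ℝ) => w ω.1 * a ω.1 ω.2) := by
      ext ω
      rw [joint_apply, ENNReal.toReal_mul]
    rw [hj]
    refine Summable.tsum_le_tsum ?_ ((Bd.ind _).summable hW1)
      (((Bd.ind S1).add (Bd.ind S2)).summable hW1)
    intro ω
    by_cases h0 : A ω.1 ω.2 = 0
    · simp [had, h0]
    · have hS : Sens Δ ω.2 := hA ω.1 ω.2 (by rwa [PMF.mem_support_iff])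
      have hFe : F ω.2 = ω.2 := if_pos hS
      refine mul_le_mul_of_nonneg_left ?_ (hW1.1 ω)
      have n1 : 0 ≤ S1.indicator (fun _ => (1 : ℝ)) ω :=
        Set.indicator_nonneg (fun _ _ => zero_le_one) _
      have n2 : 0 ≤ S2.indicator (fun _ => (1 : ℝ)) ω :=
        Set.indicator_nonneg (fun _ _ => zero_le_one) _
      refine Set.indicator_apply_le' (fun hω => ?_) (fun _ => add_nonneg n1 n2)
      have hω' : 16 * ε * Δ * n ≤ |gap w ω.2 ω.1| := hω
      rcases le_abs.1 hω' with h | h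
      · have : ω ∈ S1 := by
          show _ ≤ gap w (F ω.2) ω.1
          rw [hFe]; exact h
        simp only [this, Set.indicator_of_mem]
        linarith
      · have : ω ∈ S2 := by
          show _ ≤ gap w (fun x => - F ω.2 x) ω.1
          rw [hFe]
          refine h.trans (le_of_eq ?_)
          unfold gap Ex
          simp only [mul_neg, tsum_neg]
          ring
        simp only [this, Set.indicator_of_mem]
        linarith
  have hr : 0 < δ / ε := by positivity
  have hr1 : δ / ε ≤ 1 := by
    rw [div_le_one hε]
    have := (Real.log_pos_iff (x := ε / δ) (by positivity)).1 (by linarith)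
    rw [one_lt_div hδ] at this
    exact this.le
  have hs : δ / ε ≤ Real.sqrt (δ / ε) := by
    apply Real.le_sqrt_of_sq_le
    nlinarith
  have hn1 : (1 : ℝ) ≤ n := by
    have : (0 : ℝ) < n := lt_of_lt_of_le (by positivity) hn
    exact_mod_cast this
  have hs0 := Real.sqrt_nonneg (δ / ε)
  calc _ ≤ 3 / 8 * (δ / ε) + 3 / 8 * (δ / ε) := hle.trans (add_le_add t1 t2)
    _ < δ / ε := by linarith
    _ ≤ Real.sqrt (δ / ε) := hs
    _ ≤ n * Real.sqrt (δ / ε) := le_mul_of_one_le_left hs0 hn1
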